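/- Let h = (h₀, …, h_n) be n+1 linearly independent homogeneous polynomials of degree d in ℂ[x₀, …, x_{m+1}], let J_h(x) be the (m+2) × (n+1) Jacobian matrix with entries ∂h_j/∂x_i, and let r be its rank over the function field ℂ(x₀, …, x_{m+1}). Let U = {x ∈ ℙ^{m+1} : rank J_h(x) = r}, let Y = {(x, z) ∈ ℙ^{m+1} × ℙ^n : J_h(x)·z = 0}, and let Y₀ be the Zariski closure of Y ∩ (U × ℙ^n). Then: if r = n+1, Y₀ = ∅; and if r < n+1, Y₀ is irreducible of dimension m+1+n−r. Consequently, the image pr₂(Y₀) under the projection pr₂ : ℙ^{m+1} × ℙ^n → ℙ^n is nonempty if and only if r < n+1, and in that case pr₂(Y₀) is irreducible. -/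

import Mathlib

open MvPolynomial

noncomputable section

/-- Complex projective space `ℙ(ℂ^N) = ℙ^{N-1}(ℂ)`. -/
abbrev PSp (N : ℕ) := Projectivization ℂ (Fin N → ℂ)

/-- Polynomials in two groups of variables, the homogeneous coordinates of
`ℙ^{M-1} × ℙ^{N-1}`. -/
abbrev BiPoly (M N : ℕ) := MvPolynomial (Fin M ⊕ Fin N) ℂ

/-- A polynomial in two groups of variables is bihomogeneous if it is homogeneous in each
group of variables separately. -/
def IsBihomogeneous {M N : ℕ} (P : BiPoly M N) : Prop :=
  ∃ a b : ℕ,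
    IsWeightedHomogeneous (Sum.elim (fun _ => 1) fun _ => 0) P a ∧
    IsWeightedHomogeneous (Sum.elim (fun _ => 0) fun _ => 1) P b

/-- The zero set in `ℙ^{M-1} × ℙ^{N-1}` of a bihomogeneous polynomial. -/
def biZeroSet {M N : ℕ} (P : BiPoly M N) : Set (PSp M × PSp N) :=
  {p | eval (Sum.elim p.1.rep p.2.rep) P = 0}

/-- The Zariski topology on `ℙ^{M-1} × ℙ^{N-1}`: closed sets are the intersections of zero
sets of bihomogeneous polynomials. -/
def zariskiProd (M N : ℕ) : TopologicalSpace (PSp M × PSp N) :=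
  TopologicalSpace.generateFrom
    {s | ∃ P : BiPoly M N, IsBihomogeneous P ∧ s = (biZeroSet P)ᶜ}

/-- The Zariski topology on `ℙ^{N-1}`: closed sets are the intersections of zero sets of
homogeneous polynomials. -/
def zariski (N : ℕ) : TopologicalSpace (PSp N) :=
  TopologicalSpace.generateFrom
    {s | ∃ P : MvPolynomial (Fin N) ℂ, (∃ e, P.IsHomogeneous e) ∧
      s = {p : PSp N | eval p.rep P = 0}ᶜ}

/-! Let `f`, `g` select an `r × r` minor of `J` with determinant `D ≠ 0`. By Cramer's rule, `D`
times the projection along the coordinates `g` onto the kernel of `J` has polynomial entries, so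
generic coordinates of `x` and generic coefficients for the `N - r` columns outside `g` give a point
with entries in a polynomial ring in `M + N - r` variables, `M` and `N` being the numbers of
homogeneous coordinates of the two factors. This point is a generic zero of the locus where `J(x)`
has rank `r` and `z` lies in its kernel: for the points where `D` vanishes, one deforms along the
section of the kernel given by a minor that does not vanish there. Hence the ideal of the bicone
over the locus is a prime whose quotient embeds in the polynomial ring.

The dimension is at most `M + N - r - 2` because the transcendence degree of the coordinate ring of
the bicone drops strictly along strict inclusions of irreducible closed sets and is never less than
`2`, and at least that because freezing all the parameters but two, one at a time, at a base point
cuts out a strictly descending chain of irreducible closed sets. -/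

section Minors

open Matrix

variable {K L R S ι κ n : Type*} [Field K] [Field L] [CommRing R] [CommRing S]

theorem exists_linearIndependent_submatrix_row [Finite ι] [Fintype κ] (A : Matrix ι κ K) {r : ℕ}
    (hr : A.rank = r) : ∃ f : Fin r → ι, LinearIndependent K (A.submatrix f id).row := by
  obtain ⟨τ, a, ha, hspan, hli⟩ := exists_linearIndependent' K A.row
  have := Finite.of_injective a ha
  have := Fintype.ofFinite τ
  have hcard : Fintype.card τ = r := by
    rw [← hr, rank_eq_finrank_span_row, ← hspan, finrank_span_eq_card hli]
  let e := (Fintype.equivFinOfCardEq hcard).symm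
  exact ⟨a ∘ e, hli.comp e e.injective⟩

theorem exists_det_submatrix_ne_zero [Finite ι] [Fintype κ] (A : Matrix ι κ K) {r : ℕ}
    (hr : A.rank = r) : ∃ (f : Fin r → ι) (g : Fin r → κ), (A.submatrix f g).det ≠ 0 := by
  obtain ⟨f, hf⟩ := exists_linearIndependent_submatrix_row A hr
  obtain ⟨g, hg⟩ := exists_linearIndependent_submatrix_row (A.submatrix f id)ᵀ (r := r) <| by
    rw [rank_transpose, hf.rank_matrix, Fintype.card_fin]
  refine ⟨f, g, ?_⟩
  rw [linearIndependent_rows_iff_isUnit, isUnit_iff_isUnit_det, ← det_transpose] at hg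
  exact hg.ne_zero

theorem submatrix_mul_one_submatrix [Fintype κ] [DecidableEq κ] (A : Matrix ι κ R)
    (f : n → ι) (g : n → κ) :
    A.submatrix f id * (1 : Matrix κ κ R).submatrix id g = A.submatrix f g := by
  rw [← submatrix_mul A 1 f id g Function.bijective_id, Matrix.mul_one]

variable [Fintype n] [DecidableEq n]

theorem det_submatrix_map (h : R →+* S) (J : Matrix ι κ R) (f : n → ι) (g : n → κ) :
    ((J.map h).submatrix f g).det = h (J.submatrix f g).det :=
  (h.map_det (J.submatrix f g)).symm

theorem injective_of_det_submatrix_ne_zero {A : Matrix ι κ R} {f : n → ι} {g : n → κ}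
    (h : (A.submatrix f g).det ≠ 0) : Function.Injective g := by
  contrapose! h
  obtain ⟨a, b, hab, hne⟩ := Function.not_injective_iff.1 h
  exact det_zero_of_column_eq hne fun k => by simp [hab]

/-- `D • z - E * adj B * (J z)_f`, where `B` is the minor of `J` with rows `f` and columns `g`, `D`
is its determinant and `E` is the inclusion of the coordinates `g`: by Cramer's rule, a
denominator-free form of the projection along the coordinates `g` onto the kernel of the rows
`f`. -/
def minorProjection [DecidableEq κ] (J : Matrix ι κ R) (f : n → ι) (g : n → κ) : Matrix κ κ R :=
  (J.submatrix f g).det • 1 -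
    (1 : Matrix κ κ R).submatrix id g * ((J.submatrix f g).adjugate * J.submatrix f id)

theorem minorProjection_map [DecidableEq κ] (h : R →+* S) (J : Matrix ι κ R) (f : n → ι)
    (g : n → κ) : (minorProjection J f g).map h = minorProjection (J.map h) f g := by
  have hadj : ((J.map h).submatrix f g).adjugate = (J.submatrix f g).adjugate.map h :=
    (h.map_adjugate _).symm
  ext k l
  simp [minorProjection, mul_apply, one_apply, hadj, apply_ite h, det_submatrix_map]

theorem minorProjection_apply_of_notMem_range [DecidableEq κ] (J : Matrix ι κ R)
    (f : n → ι) {g : n → κ} {l : κ} (hl : l ∉ Set.range g) (k : κ) :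
    minorProjection J f g l k = if l = k then (J.submatrix f g).det else 0 := by
  have hl (a : n) : l ≠ g a := fun h => hl ⟨a, h.symm⟩
  simp [minorProjection, mul_apply, one_apply, hl]

theorem minorProjection_apply_range [DecidableEq κ] (J : Matrix ι κ R) (f : n → ι) (g : n → κ)
    (k : κ) (a : n) : minorProjection J f g k (g a) = 0 := by
  have hcols : (minorProjection J f g).submatrix id g = 0 := calc
    _ = (J.submatrix f g).det • (1 : Matrix κ κ R).submatrix id g -
        (1 : Matrix κ κ R).submatrix id g * ((J.submatrix f g).adjugate * J.submatrix f g) := rfl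
    _ = 0 := by rw [adjugate_mul, Matrix.mul_smul, Matrix.mul_one, sub_self]
  exact congrFun (congrFun hcols k) a

variable [Fintype κ]

theorem card_le_rank_of_det_submatrix_ne_zero [Finite ι] (A : Matrix ι κ K) {f : n → ι} {g : n → κ}
    (h : (A.submatrix f g).det ≠ 0) : Fintype.card n ≤ A.rank := by
  rw [← rank_of_det_ne_zero h]
  exact rank_submatrix_le A f g

theorem rank_map_le_rank_map [Finite ι] (h : R →+* L) {i : R →+* K} (hi : Function.Injective i)
    (J : Matrix ι κ R) : (J.map h).rank ≤ (J.map i).rank := by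
  obtain ⟨f, g, hfg⟩ := exists_det_submatrix_ne_zero (J.map h) rfl
  rw [det_submatrix_map] at hfg
  have := card_le_rank_of_det_submatrix_ne_zero (J.map i) (f := f) (g := g) <| by
    rw [det_submatrix_map]
    exact (map_ne_zero_iff i hi).2 fun h0 => hfg (by rw [h0, map_zero])
  rwa [Fintype.card_fin] at this

theorem ker_submatrix_eq_ker {A : Matrix ι κ K} {f : n → ι} {g : n → κ}
    (h : A.rank ≤ Fintype.card n) (hfg : (A.submatrix f g).det ≠ 0) :
    LinearMap.ker (A.submatrix f id).mulVecLin = LinearMap.ker A.mulVecLin := by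
  have hle : Fintype.card n ≤ (A.submatrix f id).rank :=
    card_le_rank_of_det_submatrix_ne_zero (A.submatrix f id) (f := id) (g := g) hfg
  have hsub : LinearMap.ker A.mulVecLin ≤ LinearMap.ker (A.submatrix f id).mulVecLin :=
    fun z hz => LinearMap.mem_ker.2 (funext fun a => congrFun (LinearMap.mem_ker.1 hz) (f a))
  refine (Submodule.eq_of_le_of_finrank_le hsub ?_).symm
  have h₁ := A.mulVecLin.finrank_range_add_finrank_ker
  have h₂ := (A.submatrix f id).mulVecLin.finrank_range_add_finrank_ker
  simp only [rank] at h hle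
  omega

variable [DecidableEq κ]

theorem submatrix_mul_minorProjection (J : Matrix ι κ R) (f : n → ι) (g : n → κ) :
    J.submatrix f id * minorProjection J f g = 0 := by
  rw [minorProjection, Matrix.mul_sub, ← Matrix.mul_assoc, submatrix_mul_one_submatrix,
    ← Matrix.mul_assoc, mul_adjugate, Matrix.mul_smul, Matrix.mul_one, Matrix.smul_mul,
    Matrix.one_mul, sub_self]

theorem minorProjection_mulVec_of_mulVec_eq_zero {J : Matrix ι κ R} {z : κ → R} (hz : J *ᵥ z = 0)
    (f : n → ι) (g : n → κ) : minorProjection J f g *ᵥ z = (J.submatrix f g).det • z := by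
  have hz : J.submatrix f id *ᵥ z = 0 := funext fun a => congrFun hz (f a)
  rw [minorProjection, sub_mulVec, ← mulVec_mulVec, ← mulVec_mulVec, hz]
  simp [smul_mulVec]

theorem minorProjection_submatrix_mulVec (J : Matrix ι κ R) (f : n → ι) (g : n → κ) (z : κ → R) :
    (minorProjection J f g).submatrix id ((↑) : {l // l ∉ Set.range g} → κ) *ᵥ (z ∘ (↑)) =
      minorProjection J f g *ᵥ z := by
  funext k
  refine Fintype.sum_of_injective _ Subtype.val_injective _ _ (fun l hl => ?_) fun _ => rfl
  obtain ⟨a, rfl⟩ : l ∈ Set.range g := by simpa using hl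
  exact mul_eq_zero_of_left (minorProjection_apply_range J f g k a) _

theorem mul_minorProjection_eq_zero {J : Matrix ι κ R} {i : R →+* K} (hi : Function.Injective i)
    {f : n → ι} {g : n → κ} (h : (J.map i).rank ≤ Fintype.card n)
    (hfg : (J.submatrix f g).det ≠ 0) : J * minorProjection J f g = 0 := by
  have hfg' : ((J.map i).submatrix f g).det ≠ 0 := by
    rwa [det_submatrix_map, map_ne_zero_iff i hi]
  suffices J.map i * minorProjection (J.map i) f g = 0 by
    rw [← minorProjection_map, ← Matrix.map_mul, ← Matrix.map_zero i (map_zero i)] at this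
    exact map_injective hi this
  refine ext_of_mulVec_single fun k => ?_
  rw [← mulVec_mulVec, zero_mulVec, ← mulVecLin_apply, ← LinearMap.mem_ker,
    ← ker_submatrix_eq_ker h hfg', LinearMap.mem_ker, mulVecLin_apply, mulVec_mulVec,
    submatrix_mul_minorProjection, zero_mulVec]

end Minors

section TranscendenceDegree

universe v

variable {R B B' : Type*} [CommRing R] [CommRing B] [IsDomain B] [CommRing B'] [Algebra R B]
  [Algebra R B']

theorem algebraicIndependent_option_elim_of_map_eq_zero {ι : Type*} (π : B →ₐ[R] B')
    {a : ι → B} (ha : AlgebraicIndependent R (π ∘ a)) {q : B} (hq : q ≠ 0) (hπq : π q = 0) :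
    AlgebraicIndependent R fun o : Option ι => o.elim q a := by
  rw [(ha.of_comp π).option_iff_transcendental]
  intro hq_alg
  obtain ⟨⟨s, hs⟩, hs0, hqs⟩ := hq_alg.exists_nonzero_dvd (mem_nonZeroDivisors_of_ne_zero hq)
  obtain ⟨p, rfl⟩ : ∃ p, aeval a p = s := by
    rwa [Algebra.adjoin_range_eq_range_aeval] at hs
  have hp : aeval (π ∘ a) p = 0 := by
    have hπp : π q ∣ π (aeval a p) := map_dvd π hqs
    rw [hπq, zero_dvd_iff] at hπp
    rw [← hπp, comp_aeval_apply]
    rfl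
  refine hs0 (Subtype.ext ?_)
  simp [ha.eq_zero_of_aeval_eq_zero p hp]

theorem trdeg_add_one_le_of_not_injective {k : Type*} {B B' : Type v} [Field k] [CommRing B]
    [IsDomain B] [CommRing B'] [IsDomain B'] [Algebra k B] [Algebra k B'] (π : B →ₐ[k] B')
    (hsurj : Function.Surjective π) (hinj : ¬ Function.Injective π) :
    Algebra.trdeg k B' + 1 ≤ Algebra.trdeg k B := by
  obtain ⟨ι, b, hb⟩ := exists_isTranscendenceBasis' k B'
  obtain ⟨a, rfl⟩ := hsurj.comp_left b
  obtain ⟨q, hπq, hq⟩ : ∃ q, π q = 0 ∧ q ≠ 0 := by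
    simpa [injective_iff_map_eq_zero] using hinj
  have := (algebraicIndependent_option_elim_of_map_eq_zero π hb.1 hq hπq).cardinalMk_le_trdeg
  rwa [Cardinal.mk_option, hb.cardinalMk_eq_trdeg] at this

end TranscendenceDegree

section WeightedHomogeneous

variable {K σ A : Type*} {w : σ → A}

theorem eval_character_mul_of_isWeightedHomogeneous [CommSemiring K] [AddCommMonoid A]
    {P : MvPolynomial σ K} {n : A} (hP : IsWeightedHomogeneous w P n)
    (χ : Multiplicative A →* K) (s : σ → K) :
    eval (fun i => χ (.ofAdd (w i)) * s i) P = χ (.ofAdd n) * eval s P := by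
  rw [eval_eq, eval_eq, Finset.mul_sum]
  refine Finset.sum_congr rfl fun d hd => ?_
  rw [← hP (mem_support_iff.mp hd), Finsupp.weight_apply, Finsupp.sum, ofAdd_sum, map_prod]
  simp only [mul_pow, Finset.prod_mul_distrib, ofAdd_nsmul, map_pow]
  ring

theorem eval_character_mul_eq_sum [CommSemiring K] [AddCommMonoid A] (P : MvPolynomial σ K)
    (χ : Multiplicative A →* K) (s : σ → K) :
    eval (fun i => χ (.ofAdd (w i)) * s i) P =
      ∑ n ∈ (weightedHomogeneousComponent_finsupp (w := w) P).toFinset,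
        χ (.ofAdd n) * eval s (weightedHomogeneousComponent w n P) := by
  conv_lhs => rw [← finsum_weightedHomogeneousComponent w P,
    finsum_eq_sum _ (weightedHomogeneousComponent_finsupp P), map_sum]
  exact Finset.sum_congr rfl fun n _ => eval_character_mul_of_isWeightedHomogeneous
    (weightedHomogeneousComponent_isWeightedHomogeneous n P) χ s

theorem isHomogeneous_vanishingIdeal [Field K] [AddCommMonoid A] [DecidableEq A]
    (hA : Function.Injective fun (a : A) (χ : Multiplicative A →* Kˣ) => χ (.ofAdd a))
    {V : Set (σ → K)}
    (hV : ∀ v ∈ V, ∀ χ : Multiplicative A →* Kˣ, (fun i => (χ (.ofAdd (w i)) : K) * v i) ∈ V) :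
    letI := weightedGradedAlgebra K w
    (vanishingIdeal K V).IsHomogeneous (weightedHomogeneousSubmodule K w) := by
  intro n P hP
  change ((weightedDecomposition K w).decompose' P n : MvPolynomial σ K) ∈ _
  rw [weightedDecomposition.decompose'_apply]
  simp only [mem_vanishingIdeal_iff, aeval_eq_eval] at hP ⊢
  intro v hv
  let ev (a : A) : (Multiplicative A →* Kˣ) →* K :=
    (Units.coeHom K).comp (MonoidHom.eval (.ofAdd a))
  have hev : LinearIndependent K fun a => (ev a : (Multiplicative A →* Kˣ) → K) := by
    refine (linearIndependent_monoidHom _ K).comp ev fun a b hab => hA (funext fun χ => ?_)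
    exact Units.ext (DFunLike.congr_fun hab χ)
  have hsum : ∑ a ∈ (weightedHomogeneousComponent_finsupp (w := w) P).toFinset,
      eval v (weightedHomogeneousComponent w a P) • (ev a : (Multiplicative A →* Kˣ) → K) = 0 := by
    funext χ
    have := eval_character_mul_eq_sum (w := w) P ((Units.coeHom K).comp χ) v
    rw [Finset.sum_apply, Pi.zero_apply, ← hP _ (hV v hv χ)]
    simpa [ev, mul_comm] using this.symm
  by_cases hn : weightedHomogeneousComponent w n P = 0
  · rw [hn, map_zero]
  · exact linearIndependent_iff'.1 hev _ _ hsum n ((Set.Finite.mem_toFinset _).2 hn)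

end WeightedHomogeneous

section KrullDimension

open Order TopologicalSpace

theorem krullDim_le_sub_of_strictMono {α : Type*} [Preorder α] {f : α → ℕ} (hf : StrictMono f)
    {a b : ℕ} (hab : ∀ x, f x ∈ Set.Icc a b) : krullDim α ≤ (b - a : ℕ) := by
  refine iSup_le fun p => ?_
  have hle := (p.map f hf).head_add_length_le_nat
  have ha := (hab p.head).1
  have hb := (hab p.last).2
  simp only [LTSeries.head_map, LTSeries.last_map, LTSeries.map_length] at hle
  exact_mod_cast (show p.length ≤ b - a by omega)

theorem card_le_height_of_strictMonoOn {τ α : Type*} [Preorder α]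
    {f : Finset τ → α} {T : Finset τ} (hf : StrictMonoOn f (Set.Iic T)) :
    (T.card : ℕ∞) ≤ height (f T) := by
  classical
  induction T using Finset.induction_on with
  | empty => simp
  | insert t T ht ih =>
    have hlt : f T < f (insert t T) :=
      hf (Finset.subset_insert t T) Set.self_mem_Iic (Finset.ssubset_insert ht)
    rw [Finset.card_insert_of_notMem ht, Nat.cast_succ]
    exact (add_le_add_left (ih (hf.mono (Set.Iic_subset_Iic.2 (Finset.subset_insert t T)))) 1).trans
      (height_add_one_le hlt)

variable {X : Type*} [TopologicalSpace X] {Y Z : Set X}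

theorem isIrreducible_preimage_val (hZ : IsIrreducible Z) (hZY : Z ⊆ Y) :
    IsIrreducible (Subtype.val ⁻¹' Z : Set Y) := by
  have := Subtype.irreducibleSpace hZ
  have := (IrreducibleSpace.isIrreducible_univ Z).image (Set.inclusion hZY)
    (continuous_inclusion hZY).continuousOn
  rwa [Set.image_univ, Set.range_inclusion] at this

theorem card_le_topologicalKrullDim {τ : Type*} {T : Finset τ}
    {Z : Finset τ → Set X} (hirr : ∀ S, IsIrreducible (Z S))
    (hclosed : ∀ S, IsClosed (Z S)) (hsub : ∀ S, Z S ⊆ Y)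
    (hmono : StrictMonoOn Z (Set.Iic T)) : (T.card : WithBot ℕ∞) ≤ topologicalKrullDim Y := by
  let f (S : Finset τ) : IrreducibleCloseds Y := ⟨Subtype.val ⁻¹' Z S,
    isIrreducible_preimage_val (hirr S) (hsub S), (hclosed S).preimage continuous_subtype_val⟩
  have himage (S) : Subtype.val '' (f S : Set Y) = Z S := by
    rw [IrreducibleCloseds.coe_mk, Subtype.image_preimage_coe, Set.inter_eq_right.2 (hsub S)]
  have hf : StrictMonoOn f (Set.Iic T) := fun S hS S' hS' h => by
    have := hmono hS hS' h
    rw [← himage S, ← himage S'] at this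
    rw [← SetLike.coe_ssubset_coe]
    exact (Subtype.val_injective.injOn.image_ssubset_image_iff (Set.subset_univ _)
      (Set.subset_univ _)).1 this
  exact (WithBot.coe_le_coe.2 (card_le_height_of_strictMonoOn hf)).trans (height_le_krullDim _)

end KrullDimension

section Bihomogeneous

variable {M N : ℕ}

/-- The weights of the coordinates of `ℙ^{M-1} × ℙ^{N-1}` for the grading by bidegree. The
lexicographic order on bidegrees plays no geometric role: it is a linear order compatible with
addition, so that primality of a homogeneous ideal can be tested on homogeneous elements. -/
def biWeight (M N : ℕ) : Fin M ⊕ Fin N → ℕ ×ₗ ℕ :=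
  Sum.elim (fun _ => toLex (1, 0)) fun _ => toLex (0, 1)

theorem weight_biWeight (e : Fin M ⊕ Fin N →₀ ℕ) :
    Finsupp.weight (biWeight M N) e =
      toLex (Finsupp.weight (Sum.elim (fun _ => 1) fun _ => 0) e,
        Finsupp.weight (Sum.elim (fun _ => 0) fun _ => 1) e) := by
  induction e using Finsupp.induction_linear with
  | zero => simp only [map_zero]; rfl
  | add f g hf hg => simp only [map_add, hf, hg]; rfl
  | single i k =>
    simp only [Finsupp.weight_single]
    cases i with
    | inl i => exact congrArg toLex (show k • ((1, 0) : ℕ × ℕ) = _ by simp)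
    | inr j => exact congrArg toLex (show k • ((0, 1) : ℕ × ℕ) = _ by simp)

theorem isBihomogeneous_iff {P : BiPoly M N} :
    IsBihomogeneous P ↔ ∃ c, IsWeightedHomogeneous (biWeight M N) P c := by
  constructor
  · rintro ⟨a, b, ha, hb⟩
    exact ⟨toLex (a, b), fun e he => by rw [weight_biWeight, ha he, hb he]⟩
  · rintro ⟨c, hc⟩
    refine ⟨(ofLex c).1, (ofLex c).2, fun e he => ?_, fun e he => ?_⟩ <;>
      rw [← hc he, weight_biWeight, ofLex_toLex]

theorem IsBihomogeneous.mul {P Q : BiPoly M N} (hP : IsBihomogeneous P) (hQ : IsBihomogeneous Q) :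
    IsBihomogeneous (P * Q) := by
  obtain ⟨a, b, ha, hb⟩ := hP
  obtain ⟨a', b', ha', hb'⟩ := hQ
  exact ⟨a + a', b + b', ha.mul ha', hb.mul hb'⟩

theorem isBihomogeneous_one : IsBihomogeneous (1 : BiPoly M N) :=
  ⟨0, 0, isWeightedHomogeneous_one _ _, isWeightedHomogeneous_one _ _⟩

theorem isBihomogeneous_X_inr (j : Fin N) : IsBihomogeneous (X (.inr j) : BiPoly M N) :=
  ⟨0, 1, isWeightedHomogeneous_X ℂ _ _, isWeightedHomogeneous_X ℂ _ _⟩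

theorem isBihomogeneous_inl_sub_inl (a b : ℂ) (i j : Fin M) :
    IsBihomogeneous (C a * X (.inl i) - C b * X (.inl j) : BiPoly M N) :=
  ⟨1, 0, ((isWeightedHomogeneous_X ℂ _ _).C_mul a).sub ((isWeightedHomogeneous_X ℂ _ _).C_mul b),
    ((isWeightedHomogeneous_X ℂ _ _).C_mul a).sub ((isWeightedHomogeneous_X ℂ _ _).C_mul b)⟩

theorem isBihomogeneous_rename_inr {P : MvPolynomial (Fin N) ℂ} {e : ℕ} (hP : P.IsHomogeneous e) :
    IsBihomogeneous (rename Sum.inr P : BiPoly M N) := by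
  refine ⟨0, e, fun d hd => ?_, fun d hd => ?_⟩ <;>
    obtain ⟨u, rfl, hu⟩ := coeff_rename_ne_zero _ _ _ hd
  · simp [Finsupp.weight_apply, Finsupp.sum_mapDomain_index, add_mul]
  · rw [← hP hu]
    simp [Finsupp.weight_apply, Finsupp.sum_mapDomain_index, add_mul]

/-- The character `(a, b) ↦ l ^ a * u ^ b` of the group of bidegrees. -/
def biCharacter (l u : ℂˣ) : Multiplicative (ℕ ×ₗ ℕ) →* ℂˣ where
  toFun c := l ^ (ofLex c.toAdd).1 * u ^ (ofLex c.toAdd).2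
  map_one' := by simp
  map_mul' c c' := by simp [pow_add, mul_mul_mul_comm]

theorem biCharacter_mul_sumElim (l u : ℂˣ) (x : Fin M → ℂ) (z : Fin N → ℂ) :
    (fun i => (biCharacter l u (.ofAdd (biWeight M N i)) : ℂ) * Sum.elim x z i) =
      Sum.elim (l • x) (u • z) := by
  funext i
  cases i <;> simp [biCharacter, biWeight, Units.smul_def]

theorem bidegree_characters_separate :
    Function.Injective fun (c : ℕ ×ₗ ℕ) (χ : Multiplicative (ℕ ×ₗ ℕ) →* ℂˣ) => χ (.ofAdd c) := by
  intro c c' h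
  have h2 : ((2 : ℕ) : ℂ) ≠ 0 := by norm_num
  have hpow {a b : ℕ} (hab : Units.mk0 _ h2 ^ a = Units.mk0 _ h2 ^ b) : a = b := by
    have := congrArg Units.val hab
    simp only [Units.val_pow_eq_pow_val, Units.val_mk0] at this
    exact Nat.pow_right_injective le_rfl (by exact_mod_cast this)
  have hfst := congrFun h (biCharacter (Units.mk0 _ h2) 1)
  have hsnd := congrFun h (biCharacter 1 (Units.mk0 _ h2))
  simp only [biCharacter, MonoidHom.coe_mk, OneHom.coe_mk, toAdd_ofAdd, one_pow, mul_one,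
    one_mul] at hfst hsnd
  exact ofLex.injective (Prod.ext (hpow hfst) (hpow hsnd))

theorem IsBihomogeneous.eval_units_smul_eq_zero_iff {P : BiPoly M N} (hP : IsBihomogeneous P)
    (l u : ℂˣ) (x : Fin M → ℂ) (z : Fin N → ℂ) :
    eval (Sum.elim (l • x) (u • z)) P = 0 ↔ eval (Sum.elim x z) P = 0 := by
  obtain ⟨c, hc⟩ := isBihomogeneous_iff.1 hP
  have := eval_character_mul_of_isWeightedHomogeneous hc
    ((Units.coeHom ℂ).comp (biCharacter l u)) (Sum.elim x z)
  simp only [MonoidHom.coe_comp, Function.comp_apply, Units.coeHom_apply,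
    biCharacter_mul_sumElim] at this
  simp [this]

theorem mk_mem_biZeroSet_iff {P : BiPoly M N} (hP : IsBihomogeneous P) {x : Fin M → ℂ}
    {z : Fin N → ℂ} (hx : x ≠ 0) (hz : z ≠ 0) :
    (Projectivization.mk ℂ x hx, Projectivization.mk ℂ z hz) ∈ biZeroSet P ↔
      eval (Sum.elim x z) P = 0 := by
  obtain ⟨a, ha⟩ := Projectivization.exists_smul_eq_mk_rep ℂ x hx
  obtain ⟨b, hb⟩ := Projectivization.exists_smul_eq_mk_rep ℂ z hz
  simp only [biZeroSet, Set.mem_ofPred_eq, ← ha, ← hb]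
  exact hP.eval_units_smul_eq_zero_iff a b x z

end Bihomogeneous

section ZariskiTopology

attribute [local instance] zariskiProd

open Topology TopologicalSpace

variable {M N : ℕ}

theorem biZeroSet_mul (P Q : BiPoly M N) : biZeroSet (P * Q) = biZeroSet P ∪ biZeroSet Q := by
  ext p
  simp [biZeroSet]

theorem isTopologicalBasis_compl_biZeroSet :
    IsTopologicalBasis {s : Set (PSp M × PSp N) |
      ∃ P : BiPoly M N, IsBihomogeneous P ∧ s = (biZeroSet P)ᶜ} := by
  have huniv : Set.univ ∈ {s : Set (PSp M × PSp N) |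
      ∃ P : BiPoly M N, IsBihomogeneous P ∧ s = (biZeroSet P)ᶜ} :=
    ⟨1, isBihomogeneous_one, by simp [biZeroSet]⟩
  rw [← Set.insert_eq_of_mem huniv]
  refine isTopologicalBasis_of_subbasis_of_inter rfl ?_
  rintro _ ⟨P, hP, rfl⟩ _ ⟨Q, hQ, rfl⟩
  exact ⟨P * Q, hP.mul hQ, by rw [biZeroSet_mul, Set.compl_union]⟩

theorem isClosed_biZeroSet {P : BiPoly M N} (hP : IsBihomogeneous P) : IsClosed (biZeroSet P) :=
  ⟨isOpen_generateFrom_of_mem ⟨P, hP, rfl⟩⟩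

theorem mem_closure_iff_forall_biZeroSet {A : Set (PSp M × PSp N)} {p : PSp M × PSp N} :
    p ∈ closure A ↔
      ∀ P : BiPoly M N, IsBihomogeneous P → A ⊆ biZeroSet P → p ∈ biZeroSet P := by
  refine ⟨fun hp P hP hA => closure_minimal hA (isClosed_biZeroSet hP) hp, fun h => ?_⟩
  rw [isTopologicalBasis_compl_biZeroSet.mem_closure_iff]
  rintro _ ⟨P, hP, rfl⟩ hp
  obtain ⟨q, hqA, hqP⟩ := Set.not_subset.1 (mt (h P hP) hp)
  exact ⟨q, hqP, hqA⟩

theorem isIrreducible_iff_biZeroSet {A : Set (PSp M × PSp N)} :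
    IsIrreducible A ↔ A.Nonempty ∧ ∀ P Q : BiPoly M N, IsBihomogeneous P → IsBihomogeneous Q →
      A ⊆ biZeroSet (P * Q) → A ⊆ biZeroSet P ∨ A ⊆ biZeroSet Q := by
  refine and_congr_right fun _ => ⟨fun h P Q hP hQ hPQ => ?_, fun h => ?_⟩
  · rw [biZeroSet_mul] at hPQ
    exact isPreirreducible_iff_isClosed_union_isClosed.1 h _ _ (isClosed_biZeroSet hP)
      (isClosed_biZeroSet hQ) hPQ
  · rintro u v hu hv ⟨p, hpA, hpu⟩ ⟨q, hqA, hqv⟩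
    obtain ⟨_, ⟨P, hP, rfl⟩, hpP, hPu⟩ :=
      isTopologicalBasis_compl_biZeroSet.exists_subset_of_mem_open hpu hu
    obtain ⟨_, ⟨Q, hQ, rfl⟩, hqQ, hQv⟩ :=
      isTopologicalBasis_compl_biZeroSet.exists_subset_of_mem_open hqv hv
    have hPQ : ¬ A ⊆ biZeroSet (P * Q) := fun hA =>
      (h P Q hP hQ hA).elim (fun hAP => hpP (hAP hpA)) fun hAQ => hqQ (hAQ hqA)
    obtain ⟨s, hsA, hs⟩ := Set.not_subset.1 hPQ
    rw [biZeroSet_mul, Set.mem_union, not_or] at hs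
    exact ⟨s, hsA, hPu hs.1, hQv hs.2⟩

theorem continuous_snd_zariski : Continuous[zariskiProd M N, zariski N] Prod.snd := by
  refine continuous_generateFrom_iff.2 ?_
  rintro _ ⟨P, ⟨e, hP⟩, rfl⟩
  refine isOpen_generateFrom_of_mem ⟨rename Sum.inr P, isBihomogeneous_rename_inr hP, ?_⟩
  ext p
  simp [biZeroSet, eval_rename]

/-- The bicone over `A`: the pairs of nonzero vectors representing a point of `A`. -/
def bicone (A : Set (PSp M × PSp N)) : Set (Fin M ⊕ Fin N → ℂ) :=
  {v | ∃ (hx : v ∘ Sum.inl ≠ 0) (hz : v ∘ Sum.inr ≠ 0),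
    (Projectivization.mk ℂ _ hx, Projectivization.mk ℂ _ hz) ∈ A}

/-- The ideal of all polynomials, bihomogeneous or not, that vanish on the bicone over `A`. -/
def biconeIdeal (A : Set (PSp M × PSp N)) : Ideal (BiPoly M N) :=
  vanishingIdeal ℂ (bicone A)

theorem mem_biconeIdeal_iff {A : Set (PSp M × PSp N)} {P : BiPoly M N} :
    P ∈ biconeIdeal A ↔ ∀ v ∈ bicone A, eval v P = 0 := by
  simp [biconeIdeal, mem_vanishingIdeal_iff, aeval_eq_eval]

theorem rep_mem_bicone_iff {A : Set (PSp M × PSp N)} {p : PSp M × PSp N} :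
    Sum.elim p.1.rep p.2.rep ∈ bicone A ↔ p ∈ A := by
  simp [bicone, p.1.rep_nonzero, p.2.rep_nonzero]

theorem units_smul_mem_bicone {A : Set (PSp M × PSp N)} (l u : ℂˣ) {x : Fin M → ℂ}
    {z : Fin N → ℂ} (h : Sum.elim x z ∈ bicone A) : Sum.elim (l • x) (u • z) ∈ bicone A := by
  obtain ⟨hx, hz, h⟩ := h
  simp only [Sum.elim_comp_inl, Sum.elim_comp_inr] at hx hz h
  refine ⟨(smul_ne_zero_iff_ne l).2 hx, (smul_ne_zero_iff_ne u).2 hz, ?_⟩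
  convert h using 2
  · exact (Projectivization.mk_eq_mk_iff ℂ _ _ _ _).2 ⟨l, rfl⟩
  · exact (Projectivization.mk_eq_mk_iff ℂ _ _ _ _).2 ⟨u, rfl⟩

theorem IsBihomogeneous.mem_biconeIdeal_iff {A : Set (PSp M × PSp N)} {P : BiPoly M N}
    (hP : IsBihomogeneous P) : P ∈ biconeIdeal A ↔ A ⊆ biZeroSet P := by
  rw [_root_.mem_biconeIdeal_iff]
  constructor
  · exact fun h p hp => h _ (rep_mem_bicone_iff.2 hp)
  · rintro h v ⟨hx, hz, hv⟩
    simpa using (mk_mem_biZeroSet_iff hP hx hz).1 (h hv)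

theorem biconeIdeal_anti {A B : Set (PSp M × PSp N)} (h : A ⊆ B) :
    biconeIdeal B ≤ biconeIdeal A :=
  vanishingIdeal_anti_mono fun _ ⟨hx, hz, hv⟩ => ⟨hx, hz, h hv⟩

theorem biconeIdeal_lt_of_ssubset {A B : Set (PSp M × PSp N)} (hA : IsClosed A) (h : A ⊂ B) :
    biconeIdeal B < biconeIdeal A := by
  obtain ⟨p, hpB, hpA⟩ := Set.exists_of_ssubset h
  rw [← hA.closure_eq, mem_closure_iff_forall_biZeroSet] at hpA
  push Not at hpA
  obtain ⟨P, hP, hAP, hpP⟩ := hpA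
  refine lt_of_le_not_ge (biconeIdeal_anti h.subset) fun hle => hpP ?_
  exact hP.mem_biconeIdeal_iff.1 (hle (hP.mem_biconeIdeal_iff.2 hAP)) hpB

theorem isHomogeneous_biconeIdeal (A : Set (PSp M × PSp N)) :
    letI := weightedGradedAlgebra ℂ (biWeight M N)
    (biconeIdeal A).IsHomogeneous (weightedHomogeneousSubmodule ℂ (biWeight M N)) := by
  refine isHomogeneous_vanishingIdeal bidegree_characters_separate fun v hv χ => ?_
  have := units_smul_mem_bicone (χ (.ofAdd (toLex (1, 0)))) (χ (.ofAdd (toLex (0, 1))))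
    (x := v ∘ Sum.inl) (z := v ∘ Sum.inr) (by simpa using hv)
  convert this using 1
  funext i
  cases i <;> rfl

theorem isPrime_biconeIdeal {A : Set (PSp M × PSp N)} (hA : IsIrreducible A) :
    (biconeIdeal A).IsPrime := by
  obtain ⟨⟨p, hp⟩, hmul⟩ := isIrreducible_iff_biZeroSet.1 hA
  let := weightedGradedAlgebra ℂ (biWeight M N)
  refine (isHomogeneous_biconeIdeal A).isPrime_of_homogeneous_mem_or_mem ?_ ?_
  · rw [Ideal.ne_top_iff_one, isBihomogeneous_one.mem_biconeIdeal_iff]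
    exact fun h => one_ne_zero ((map_one (eval _)).symm.trans (h hp))
  · rintro P Q hP hQ hPQ
    replace hP := isBihomogeneous_iff.2 hP
    replace hQ := isBihomogeneous_iff.2 hQ
    rw [(hP.mul hQ).mem_biconeIdeal_iff] at hPQ
    rw [hP.mem_biconeIdeal_iff, hQ.mem_biconeIdeal_iff]
    exact hmul P Q hP hQ hPQ

theorem biconeIdeal_closure (A : Set (PSp M × PSp N)) :
    biconeIdeal (closure A) = biconeIdeal A := by
  refine le_antisymm (biconeIdeal_anti subset_closure) fun P hP => ?_
  rw [← finsum_weightedHomogeneousComponent (biWeight M N) P,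
    finsum_eq_sum _ (weightedHomogeneousComponent_finsupp P)]
  refine Ideal.sum_mem _ fun c _ => ?_
  have hc : IsBihomogeneous (weightedHomogeneousComponent (biWeight M N) c P) :=
    isBihomogeneous_iff.2 ⟨c, weightedHomogeneousComponent_isWeightedHomogeneous c P⟩
  rw [hc.mem_biconeIdeal_iff, (isClosed_biZeroSet hc).closure_subset_iff,
    ← hc.mem_biconeIdeal_iff]
  have := isHomogeneous_biconeIdeal A c hP
  change ((weightedDecomposition ℂ (biWeight M N)).decompose' P c : BiPoly M N) ∈ _ at this
  rwa [weightedDecomposition.decompose'_apply] at this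

/-- A homomorphism `φ` exhibits its values at the coordinates as a generic zero of `A`, in van der
Waerden's sense: a bihomogeneous polynomial vanishes on `A` exactly when it vanishes at that
point. -/
def IsGenericZero {R : Type*} [CommRing R] [Algebra ℂ R] (φ : BiPoly M N →ₐ[ℂ] R)
    (A : Set (PSp M × PSp N)) : Prop :=
  ∀ P : BiPoly M N, IsBihomogeneous P → (A ⊆ biZeroSet P ↔ φ P = 0)

section GenericZero

variable {R S : Type*} [CommRing R] [Algebra ℂ R] [CommRing S] [Algebra ℂ S]
  {φ : BiPoly M N →ₐ[ℂ] R} {A B : Set (PSp M × PSp N)}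

theorem IsGenericZero.isIrreducible [IsDomain R] (hA : IsGenericZero φ A) : IsIrreducible A := by
  refine isIrreducible_iff_biZeroSet.2 ⟨Set.nonempty_iff_ne_empty.2 ?_, fun P Q hP hQ hPQ => ?_⟩
  · rintro rfl
    exact one_ne_zero ((map_one φ).symm.trans ((hA 1 isBihomogeneous_one).1 (Set.empty_subset _)))
  · rw [hA _ (hP.mul hQ), map_mul, mul_eq_zero] at hPQ
    rwa [hA P hP, hA Q hQ]

theorem IsGenericZero.closure_subset_closure {κ : R →ₐ[ℂ] S} (hA : IsGenericZero φ A)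
    (hB : IsGenericZero (κ.comp φ) B) : closure B ⊆ closure A := by
  refine closure_minimal (fun p hp => mem_closure_iff_forall_biZeroSet.2 fun P hP hAP => ?_)
    isClosed_closure
  exact (hB P hP).2 (by rw [AlgHom.comp_apply, (hA P hP).1 hAP, map_zero]) hp

protected theorem IsGenericZero.closure (hA : IsGenericZero φ A) : IsGenericZero φ (closure A) :=
  fun P hP => (isClosed_biZeroSet hP).closure_subset_iff.trans (hA P hP)

end GenericZero

/-- The points of `ℙ^{M-1} × ℙ^{N-1}` whose coordinates are the specialisations of the
polynomials `φ (X i)`. -/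
def paramSet {τ : Type*} (φ : BiPoly M N →ₐ[ℂ] MvPolynomial τ ℂ) : Set (PSp M × PSp N) :=
  {p | ∃ (s : τ → ℂ) (hx : (fun i => eval s (φ (X (.inl i)))) ≠ 0)
    (hz : (fun j => eval s (φ (X (.inr j)))) ≠ 0),
    p = (Projectivization.mk ℂ _ hx, Projectivization.mk ℂ _ hz)}

theorem eval_algHom_eq {σ τ : Type*} (φ : MvPolynomial σ ℂ →ₐ[ℂ] MvPolynomial τ ℂ) (s : τ → ℂ)
    (P : MvPolynomial σ ℂ) : eval s (φ P) = eval (fun i => eval s (φ (X i))) P := by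
  simpa [aeval_eq_eval, Function.comp_def] using
    DFunLike.congr_fun (aeval_unique ((aeval s).comp φ)) P

theorem exists_eval_ne_zero {σ K : Type*} [Field K] [Infinite K] {P : MvPolynomial σ K}
    (hP : P ≠ 0) : ∃ s, eval s P ≠ 0 := by
  contrapose! hP
  exact MvPolynomial.funext fun s => by rw [hP s, map_zero]

theorem isGenericZero_paramSet {τ : Type*} {φ : BiPoly M N →ₐ[ℂ] MvPolynomial τ ℂ} {i : Fin M}
    {j : Fin N} (hi : φ (X (.inl i)) ≠ 0) (hj : φ (X (.inr j)) ≠ 0) :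
    IsGenericZero φ (paramSet φ) := by
  intro P hP
  have heval (s : τ → ℂ) : eval s (φ P) = eval (Sum.elim (fun i => eval s (φ (X (.inl i))))
      fun j => eval s (φ (X (.inr j)))) P := by
    rw [eval_algHom_eq]
    congr 2
    exact funext (Sum.rec (fun _ => rfl) fun _ => rfl)
  constructor
  · contrapose!
    intro hne hsub
    obtain ⟨s, hs⟩ := exists_eval_ne_zero (mul_ne_zero hne (mul_ne_zero hi hj))
    simp only [map_mul, mul_ne_zero_iff] at hs
    have hx : (fun i => eval s (φ (X (.inl i)))) ≠ 0 := Function.ne_iff.2 ⟨i, hs.2.1⟩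
    have hz : (fun j => eval s (φ (X (.inr j)))) ≠ 0 := Function.ne_iff.2 ⟨j, hs.2.2⟩
    refine hs.1 ?_
    rw [heval, ← mk_mem_biZeroSet_iff hP hx hz]
    exact hsub ⟨s, hx, hz, rfl⟩
  · rintro h _ ⟨s, hx, hz, rfl⟩
    rw [mk_mem_biZeroSet_iff hP, ← heval, h, map_zero]

section UpperBound

open Algebra

/-- The dimension of the bicone over `A`, as the transcendence degree of its coordinate ring. -/
def coneDim (A : Set (PSp M × PSp N)) : ℕ :=
  Cardinal.toNat (trdeg ℂ (BiPoly M N ⧸ biconeIdeal A))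

theorem coneDim_lt_of_ssubset {A B : Set (PSp M × PSp N)} (hA : IsIrreducible A)
    (hA' : IsClosed A) (hB : IsIrreducible B) (h : A ⊂ B) : coneDim A < coneDim B := by
  have := isPrime_biconeIdeal hA
  have := isPrime_biconeIdeal hB
  have hlt := biconeIdeal_lt_of_ssubset hA' h
  have hle : trdeg ℂ (BiPoly M N ⧸ biconeIdeal A) + 1 ≤ trdeg ℂ (BiPoly M N ⧸ biconeIdeal B) := by
    refine trdeg_add_one_le_of_not_injective (Ideal.Quotient.factorₐ ℂ hlt.le)
      (Ideal.Quotient.factor_surjective hlt.le) fun hinj => hlt.not_ge fun P hP => ?_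
    rw [← Ideal.Quotient.eq_zero_iff_mem] at hP ⊢
    exact hinj (hP.trans (map_zero _).symm)
  have hfin {C : Set (PSp M × PSp N)} : trdeg ℂ (BiPoly M N ⧸ biconeIdeal C) < Cardinal.aleph0 :=
    trdeg_lt_aleph0_of_finiteType
  have := Cardinal.toNat_le_toNat hle hfin
  rwa [Cardinal.toNat_add hfin Cardinal.one_lt_aleph0, Cardinal.one_toNat] at this

theorem coneDim_le_card {A : Set (PSp M × PSp N)} {τ : Type} [Fintype τ]
    {φ : BiPoly M N →ₐ[ℂ] MvPolynomial τ ℂ} (hφ : RingHom.ker φ ≤ biconeIdeal A) :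
    coneDim A ≤ Fintype.card τ := by
  have hcard : trdeg ℂ (BiPoly M N ⧸ biconeIdeal A) ≤ Fintype.card τ := calc
    _ ≤ trdeg ℂ (BiPoly M N ⧸ RingHom.ker φ) :=
      trdeg_le_of_surjective (Ideal.Quotient.factorₐ ℂ hφ) (Ideal.Quotient.factor_surjective hφ)
    _ ≤ trdeg ℂ (MvPolynomial τ ℂ) :=
      trdeg_le_of_injective (Ideal.kerLiftAlg φ) (Ideal.kerLiftAlg_injective φ)
    _ = Fintype.card τ := by rw [MvPolynomial.trdeg_of_isDomain]; simp
  simpa [coneDim] using Cardinal.toNat_le_toNat hcard Cardinal.natCast_lt_aleph0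

theorem two_le_coneDim {A : Set (PSp M × PSp N)} (hA : A.Nonempty) : 2 ≤ coneDim A := by
  obtain ⟨p, hp⟩ := hA
  obtain ⟨i, hi⟩ := Function.ne_iff.1 p.1.rep_nonzero
  obtain ⟨j, hj⟩ := Function.ne_iff.1 p.2.rep_nonzero
  -- Restriction to the plane of pairs `(l • x, u • z)`, where `(x, z)` represents `p`.
  let ρ : BiPoly M N →ₐ[ℂ] MvPolynomial (Fin 2) ℂ :=
    aeval (Sum.elim (fun i => C (p.1.rep i) * X 0) fun j => C (p.2.rep j) * X 1)
  have heval (P : BiPoly M N) (s : Fin 2 → ℂ) :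
      eval s (ρ P) = eval (Sum.elim (s 0 • p.1.rep) (s 1 • p.2.rep)) P := by
    rw [eval_algHom_eq]
    congr 2
    exact funext (Sum.rec (fun i => by simp [ρ, mul_comm]) fun j => by simp [ρ, mul_comm])
  have hρ : biconeIdeal A ≤ RingHom.ker ρ := fun P hP => by
    refine RingHom.mem_ker.2 (by_contra fun hne => ?_)
    obtain ⟨s, hs⟩ := exists_eval_ne_zero
      (mul_ne_zero hne (mul_ne_zero (X_ne_zero (R := ℂ) (0 : Fin 2)) (X_ne_zero 1)))
    simp only [map_mul, eval_X, mul_ne_zero_iff] at hs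
    refine hs.1 ((heval P s).trans (mem_biconeIdeal_iff.1 hP _ ?_))
    exact units_smul_mem_bicone (.mk0 _ hs.2.1) (.mk0 _ hs.2.2) (rep_mem_bicone_iff.2 hp)
  have hsurj : Function.Surjective ρ := by
    have hX0 : ρ (C (p.1.rep i)⁻¹ * X (.inl i)) = X 0 := by
      simp [ρ, ← mul_assoc, ← C_mul, inv_mul_cancel₀ hi, algebraMap_eq]
    have hX1 : ρ (C (p.2.rep j)⁻¹ * X (.inr j)) = X 1 := by
      simp [ρ, ← mul_assoc, ← C_mul, inv_mul_cancel₀ hj, algebraMap_eq]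
    rw [← AlgHom.range_eq_top, ← top_le_iff, ← adjoin_range_X, adjoin_le_iff]
    rintro _ ⟨k, rfl⟩
    fin_cases k
    exacts [⟨_, hX0⟩, ⟨_, hX1⟩]
  have hle := trdeg_le_of_surjective (Ideal.Quotient.liftₐ (biconeIdeal A) ρ hρ)
    (Ideal.Quotient.lift_surjective_of_surjective _ hρ hsurj)
  rw [MvPolynomial.trdeg_of_isDomain] at hle
  simpa [coneDim] using Cardinal.toNat_le_toNat hle trdeg_lt_aleph0_of_finiteType

theorem topologicalKrullDim_le_card_sub_two {A : Set (PSp M × PSp N)} (hA : IsClosed A) {τ : Type}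
    [Fintype τ] {φ : BiPoly M N →ₐ[ℂ] MvPolynomial τ ℂ} (hφ : RingHom.ker φ ≤ biconeIdeal A) :
    topologicalKrullDim A ≤ (Fintype.card τ - 2 : ℕ) := by
  let toAmbient := IrreducibleCloseds.map (Subtype.val : A → _) continuous_subtype_val
  have hmono : StrictMono toAmbient := IrreducibleCloseds.map_strictMono_of_isInducing .subtypeVal
  refine krullDim_le_sub_of_strictMono (f := fun Z => coneDim (toAmbient Z : Set (PSp M × PSp N)))
    (fun Z Z' h => ?_) fun Z => ⟨two_le_coneDim (toAmbient Z).isIrreducible.nonempty, ?_⟩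
  · exact coneDim_lt_of_ssubset (toAmbient Z).isIrreducible (toAmbient Z).isClosed
      (toAmbient Z').isIrreducible (SetLike.coe_ssubset_coe.2 (hmono h))
  · refine coneDim_le_card (hφ.trans (biconeIdeal_anti ?_))
    exact closure_minimal (Subtype.coe_image_subset A Z) hA

end UpperBound

section LowerBound

variable {K τ : Type*} [DecidableEq τ] [CommSemiring K]

/-- Specialisation of the variables outside `S` to the coordinates of the base point `c`. -/
def specialize (c : τ → K) (S : Finset τ) : MvPolynomial τ K →ₐ[K] MvPolynomial τ K :=
  aeval fun t => if t ∈ S then X t else C (c t)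

theorem specialize_X_of_mem (c : τ → K) {S : Finset τ} {t : τ} (ht : t ∈ S) :
    specialize c S (X t) = X t := by
  simp [specialize, ht]

theorem specialize_X_of_notMem (c : τ → K) {S : Finset τ} {t : τ} (ht : t ∉ S) :
    specialize c S (X t) = C (c t) := by
  simp [specialize, ht]

theorem specialize_C (c : τ → K) (S : Finset τ) (a : K) : specialize c S (C a) = C a :=
  algHom_C _ a

theorem specialize_comp_specialize (c : τ → K) {S T : Finset τ} (h : S ⊆ T) :
    (specialize c S).comp (specialize c T) = specialize c S := by
  refine algHom_ext fun t => ?_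
  rw [AlgHom.comp_apply]
  by_cases ht : t ∈ T
  · rw [specialize_X_of_mem c ht]
  · rw [specialize_X_of_notMem c ht, specialize_C, specialize_X_of_notMem c (mt (@h t) ht)]

theorem eval_specialize (c : τ → K) (S : Finset τ) (P : MvPolynomial τ K) :
    eval c (specialize c S P) = eval c P := by
  have : (aeval c).comp (specialize c S) = aeval c := by
    refine algHom_ext fun t => ?_
    by_cases ht : t ∈ S <;> simp [specialize, ht]
  simpa [aeval_eq_eval] using DFunLike.congr_fun this P

/-- Specialising the variables of `T` one at a time cuts out a strictly descending chain. -/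
theorem IsGenericZero.card_le_topologicalKrullDim_closure {A : Set (PSp M × PSp N)}
    {φ : BiPoly M N →ₐ[ℂ] MvPolynomial τ ℂ} (hφ : IsGenericZero φ A) {c : τ → ℂ} {i : Fin M}
    {j : Fin N} (hi : eval c (φ (X (.inl i))) ≠ 0) (hj : eval c (φ (X (.inr j))) ≠ 0)
    {T : Finset τ}
    (hT : ∀ t ∈ T, ∃ P, IsBihomogeneous P ∧
      ∃ Q, specialize c T (φ P) = (X t - C (c t)) * Q ∧ eval c Q ≠ 0) :
    (T.card : WithBot ℕ∞) ≤ topologicalKrullDim (closure A) := by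
  have hne {S : Finset τ} {P : BiPoly M N} (hP : eval c (φ P) ≠ 0) :
      (specialize c S).comp φ P ≠ 0 := fun h => hP <| by
    rw [← eval_specialize c S, ← AlgHom.comp_apply, h, map_zero]
  have hgen (S : Finset τ) : IsGenericZero ((specialize c S).comp φ)
      (paramSet ((specialize c S).comp φ)) := isGenericZero_paramSet (hne hi) (hne hj)
  refine card_le_topologicalKrullDim
    (Z := fun S => closure (paramSet ((specialize c S).comp φ)))
    (fun S => (hgen S).isIrreducible.closure) (fun S => isClosed_closure)
    (fun S => hφ.closure_subset_closure (hgen S)) fun S _ S' hS' hlt => ?_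
  refine (Set.ssubset_iff_of_subset ?_).2 ?_
  · refine (hgen S').closure_subset_closure (κ := specialize c S) ?_
    rw [← AlgHom.comp_assoc, specialize_comp_specialize c hlt.subset]
    exact hgen S
  · obtain ⟨t, htS', htS⟩ := Finset.exists_of_ssubset hlt
    obtain ⟨P, hP, Q, hPQ, hQ⟩ := hT t (hS' htS')
    have hspec {R : Finset τ} (hR : R ⊆ T) : (specialize c R).comp φ P =
        (specialize c R (X t) - C (c t)) * specialize c R Q := by
      rw [AlgHom.comp_apply, ← DFunLike.congr_fun (specialize_comp_specialize c hR) (φ P),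
        AlgHom.comp_apply, hPQ, map_mul, map_sub, specialize_C]
    obtain ⟨p, hp, hpP⟩ := Set.not_subset.1 <| mt ((hgen S').closure P hP).1 <| by
      rw [hspec hS', specialize_X_of_mem c htS']
      refine mul_ne_zero (fun h => ?_) fun h => hQ ?_
      · simpa using congrArg (eval fun _ => c t + 1) h
      · rw [← eval_specialize c S', h, map_zero]
    refine ⟨p, hp, fun hpS => hpP (((hgen S).closure P hP).2 ?_ hpS)⟩
    rw [hspec (hlt.subset.trans hS'), specialize_X_of_notMem c htS, sub_self, zero_mul]

end LowerBound

section KernelLocus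

open Matrix

variable {ι : Type*} {r : ℕ} {J : Matrix ι (Fin N) (MvPolynomial (Fin M) ℂ)}

/-- The pairs `(x, z)` such that `J(x)` has rank `r` and `z` lies in its kernel. -/
def kernelLocus (J : Matrix ι (Fin N) (MvPolynomial (Fin M) ℂ)) (r : ℕ) :
    Set (PSp M × PSp N) :=
  {p | J.map (eval p.1.rep) *ᵥ p.2.rep = 0 ∧ (J.map (eval p.1.rep)).rank = r}

theorem map_eval_smul [Fintype ι] [DecidableEq ι] {q : ι → ℕ}
    (hJ : ∀ i j, (J i j).IsHomogeneous (q i)) (a : ℂ) (x : Fin M → ℂ) :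
    J.map (eval (a • x)) = diagonal (fun i => a ^ q i) * J.map (eval x) := by
  ext i j
  have := eval_character_mul_of_isWeightedHomogeneous (hJ i j) (powersHom ℂ a) x
  simpa [Pi.smul_def] using this

theorem mk_mem_kernelLocus_iff [Finite ι] {q : ι → ℕ} (hJ : ∀ i j, (J i j).IsHomogeneous (q i))
    {x : Fin M → ℂ} {z : Fin N → ℂ} (hx : x ≠ 0) (hz : z ≠ 0) :
    (Projectivization.mk ℂ x hx, Projectivization.mk ℂ z hz) ∈ kernelLocus J r ↔
      J.map (eval x) *ᵥ z = 0 ∧ (J.map (eval x)).rank = r := by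
  classical
  have := Fintype.ofFinite ι
  obtain ⟨a, ha⟩ := Projectivization.exists_smul_eq_mk_rep ℂ x hx
  obtain ⟨b, hb⟩ := Projectivization.exists_smul_eq_mk_rep ℂ z hz
  have hdet : IsUnit (diagonal fun i => (a : ℂ) ^ q i).det := by
    simp [Finset.prod_ne_zero_iff]
  have hker : J.map (eval (a • x)) *ᵥ (b • z) = 0 ↔ J.map (eval x) *ᵥ z = 0 := by
    rw [Units.smul_def, map_eval_smul hJ, ← mulVec_mulVec, mulVec_smul,
      (mulVec_injective_of_isUnit ((isUnit_iff_isUnit_det _).2 hdet)).eq_iff' (mulVec_zero _),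
      smul_eq_zero_iff_eq]
  simp only [kernelLocus, Set.mem_ofPred_eq, ← ha, ← hb, hker]
  rw [Units.smul_def, map_eval_smul hJ, rank_mul_eq_right_of_isUnit_det _ _ hdet]

theorem kernelLocus_eq_empty (J : Matrix ι (Fin N) (MvPolynomial (Fin M) ℂ)) :
    kernelLocus J N = ∅ := by
  refine Set.eq_empty_of_forall_notMem fun p ⟨hker, hrank⟩ => p.2.rep_nonzero ?_
  have hbot : LinearMap.ker (J.map (eval p.1.rep)).mulVecLin = ⊥ := by
    have := (J.map (eval p.1.rep)).mulVecLin.finrank_range_add_finrank_ker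
    rw [← rank, hrank, Module.finrank_fin_fun, Nat.add_eq_left] at this
    exact Submodule.finrank_eq_zero.1 this
  exact LinearMap.ker_eq_bot'.1 hbot _ hker

/-- The homomorphism whose values at the coordinates form the generic point of `kernelLocus J r`:
the point `x` is generic and `z` is the combination with generic coefficients of the columns of
`minorProjection J f g`, of which those indexed by `Set.range g` vanish. -/
def kernelParam (J : Matrix ι (Fin N) (MvPolynomial (Fin M) ℂ)) (f : Fin r → ι)
    (g : Fin r → Fin N) :
    BiPoly M N →ₐ[ℂ] MvPolynomial (Fin M ⊕ {l // l ∉ Set.range g}) ℂ :=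
  aeval <| Sum.elim (fun i => X (.inl i)) fun j =>
    ∑ l : {l // l ∉ Set.range g}, rename Sum.inl (minorProjection J f g j l) * X (.inr l)

variable {f : Fin r → ι} {g : Fin r → Fin N}

theorem card_kernelParam_variables (hfg : (J.submatrix f g).det ≠ 0) :
    Fintype.card (Fin M ⊕ {l // l ∉ Set.range g}) = M + (N - r) := by
  have hg : Fintype.card {l // l ∈ Set.range g} = r :=
    (Set.card_range_of_injective (injective_of_det_submatrix_ne_zero hfg)).trans
      (Fintype.card_fin r)
  rw [Fintype.card_sum, Fintype.card_subtype_compl, hg, Fintype.card_fin, Fintype.card_fin]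

theorem kernelParam_X_inl (i : Fin M) : kernelParam J f g (X (.inl i)) = X (.inl i) := by
  simp [kernelParam]

theorem kernelParam_X_inr {l : Fin N} (hl : l ∉ Set.range g) :
    kernelParam J f g (X (.inr l)) = rename Sum.inl (J.submatrix f g).det * X (.inr ⟨l, hl⟩) := by
  rw [kernelParam, aeval_X, Sum.elim_inr, Fintype.sum_eq_single ⟨l, hl⟩ fun k hk => ?_,
    minorProjection_apply_of_notMem_range J f hl, if_pos rfl]
  rw [minorProjection_apply_of_notMem_range J f hl, if_neg fun h => hk (Subtype.ext h.symm),
    map_zero, zero_mul]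

theorem eval_kernelParam (P : BiPoly M N) (x : Fin M → ℂ) (t : {l // l ∉ Set.range g} → ℂ) :
    eval (Sum.elim x t) (kernelParam J f g P) =
      eval (Sum.elim x
        ((minorProjection (J.map (eval x)) f g).submatrix id Subtype.val *ᵥ t)) P := by
  rw [eval_algHom_eq]
  congr 2
  funext k
  cases k with
  | inl i => simp [kernelParam]
  | inr j =>
    simp [kernelParam, ← minorProjection_map, mulVec, dotProduct, eval_rename]

theorem eval_eq_zero_of_kernelParam_eq_zero {P : BiPoly M N} (hP : kernelParam J f g P = 0)
    {x : Fin M → ℂ} {z : Fin N → ℂ} (hz : J.map (eval x) *ᵥ z = 0)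
    (hx : eval x (J.submatrix f g).det ≠ 0) : eval (Sum.elim x z) P = 0 := by
  have hlift := eval_kernelParam (J := J) (f := f) P x
    (((eval x (J.submatrix f g).det)⁻¹ • z) ∘ (Subtype.val : {l // l ∉ Set.range g} → Fin N))
  rwa [hP, map_zero, minorProjection_submatrix_mulVec, mulVec_smul,
    minorProjection_mulVec_of_mulVec_eq_zero hz, det_submatrix_map, inv_smul_smul₀ hx,
    eq_comm] at hlift

variable {F : Type*} [Field F] {i : MvPolynomial (Fin M) ℂ →+* F}

theorem map_eval_mulVec_minorProjection (hi : Function.Injective i) (hr : (J.map i).rank = r)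
    (hfg : (J.submatrix f g).det ≠ 0) (x : Fin M → ℂ) (w : Fin N → ℂ) :
    J.map (eval x) *ᵥ (minorProjection (J.map (eval x)) f g *ᵥ w) = 0 := by
  rw [mulVec_mulVec, ← minorProjection_map, ← Matrix.map_mul,
    mul_minorProjection_eq_zero hi (by simp [hr]) hfg, Matrix.map_zero _ (map_zero _), zero_mulVec]

variable [Finite ι] {q : ι → ℕ}

theorem mem_bicone_kernelLocus_iff (hJ : ∀ i j, (J i j).IsHomogeneous (q i)) {x : Fin M → ℂ}
    {z : Fin N → ℂ} : Sum.elim x z ∈ bicone (kernelLocus J r) ↔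
      x ≠ 0 ∧ z ≠ 0 ∧ J.map (eval x) *ᵥ z = 0 ∧ (J.map (eval x)).rank = r := by
  simp only [bicone, Set.mem_ofPred_eq, Sum.elim_comp_inl, Sum.elim_comp_inr, exists_prop,
    mk_mem_kernelLocus_iff hJ]

theorem ker_kernelParam_le (hJ : ∀ i j, (J i j).IsHomogeneous (q i)) (hi : Function.Injective i)
    (hr : (J.map i).rank = r) (hfg : (J.submatrix f g).det ≠ 0) :
    RingHom.ker (kernelParam J f g) ≤ biconeIdeal (kernelLocus J r) := by
  refine fun P hP => mem_biconeIdeal_iff.2 fun v hv => ?_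
  obtain ⟨x, z, rfl⟩ : ∃ x z, v = Sum.elim x z := ⟨_, _, (Sum.elim_comp_inl_inr v).symm⟩
  obtain ⟨-, -, hker, hrank⟩ := (mem_bicone_kernelLocus_iff hJ).1 hv
  obtain ⟨f₁, g₁, hx⟩ := exists_det_submatrix_ne_zero _ hrank
  rw [det_submatrix_map] at hx
  let w := (eval x (J.submatrix f₁ g₁).det)⁻¹ • z
  -- `y ↦ minorProjection J(y) f₁ g₁ *ᵥ w` is a section of the kernel through `(x, z)`.
  let ψ : MvPolynomial (Fin M) ℂ :=
    aeval (Sum.elim X fun j => ∑ l, minorProjection J f₁ g₁ j l * C (w l)) P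
  have hψ (y : Fin M → ℂ) : eval y ψ =
      eval (Sum.elim y (minorProjection (J.map (eval y)) f₁ g₁ *ᵥ w)) P := by
    rw [eval_algHom_eq]
    congr 2
    funext k
    cases k <;> simp [← minorProjection_map, mulVec, dotProduct]
  have hzero : (J.submatrix f g).det * ψ = 0 := by
    refine MvPolynomial.funext fun y => ?_
    rw [map_mul, map_zero, mul_eq_zero, or_iff_not_imp_left, hψ]
    exact eval_eq_zero_of_kernelParam_eq_zero hP <| map_eval_mulVec_minorProjection hi hr
      (fun h => hx (by rw [h, map_zero])) y w
  have hψx := hψ x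
  rwa [(mul_eq_zero.1 hzero).resolve_left hfg, map_zero, mulVec_smul,
    minorProjection_mulVec_of_mulVec_eq_zero hker, det_submatrix_map, inv_smul_smul₀ hx,
    eq_comm] at hψx

theorem biconeIdeal_kernelLocus_le (hJ : ∀ i j, (J i j).IsHomogeneous (q i))
    (hi : Function.Injective i) (hr : (J.map i).rank = r) (hfg : (J.submatrix f g).det ≠ 0)
    (k : Fin M) {l : Fin N} (hl : l ∉ Set.range g) :
    biconeIdeal (kernelLocus J r) ≤ RingHom.ker (kernelParam J f g) := by
  refine fun P hP => RingHom.mem_ker.2 (by_contra fun hne => ?_)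
  have hD : (rename Sum.inl (J.submatrix f g).det :
      MvPolynomial (Fin M ⊕ {l // l ∉ Set.range g}) ℂ) ≠ 0 :=
    (map_ne_zero_iff _ (rename_injective _ Sum.inl_injective)).2 hfg
  obtain ⟨s, hs⟩ := exists_eval_ne_zero <| mul_ne_zero hne <| mul_ne_zero (X_ne_zero (.inl k)) <|
    mul_ne_zero hD (X_ne_zero (R := ℂ) (.inr ⟨l, hl⟩))
  obtain ⟨x, t, rfl⟩ : ∃ x t, s = Sum.elim x t := ⟨_, _, (Sum.elim_comp_inl_inr s).symm⟩
  obtain ⟨w, rfl⟩ := Subtype.val_injective.surjective_comp_right t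
  simp only [map_mul, eval_rename, eval_X, Sum.elim_comp_inl, Sum.elim_inl, Sum.elim_inr,
    Function.comp_apply, mul_ne_zero_iff, eval_kernelParam, minorProjection_submatrix_mulVec] at hs
  obtain ⟨hPs, hxk, hDx, hwl⟩ := hs
  refine hPs (mem_biconeIdeal_iff.1 hP _ ((mem_bicone_kernelLocus_iff hJ).2 ⟨?_, ?_, ?_, ?_⟩))
  · exact Function.ne_iff.2 ⟨k, hxk⟩
  · refine Function.ne_iff.2 ⟨l, ?_⟩
    simpa [mulVec, dotProduct, minorProjection_apply_of_notMem_range _ f hl, det_submatrix_map]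
      using ⟨hDx, hwl⟩
  · exact map_eval_mulVec_minorProjection hi hr hfg x w
  · refine le_antisymm (hr ▸ rank_map_le_rank_map (eval x) hi J) ?_
    simpa using card_le_rank_of_det_submatrix_ne_zero (J.map (eval x)) (f := f) (g := g)
      (by rwa [det_submatrix_map])

theorem biconeIdeal_kernelLocus (hJ : ∀ i j, (J i j).IsHomogeneous (q i))
    (hi : Function.Injective i) (hr : (J.map i).rank = r) (hfg : (J.submatrix f g).det ≠ 0)
    (k : Fin M) {l : Fin N} (hl : l ∉ Set.range g) :
    biconeIdeal (kernelLocus J r) = RingHom.ker (kernelParam J f g) :=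
  (biconeIdeal_kernelLocus_le hJ hi hr hfg k hl).antisymm (ker_kernelParam_le hJ hi hr hfg)

theorem isGenericZero_kernelParam (hJ : ∀ i j, (J i j).IsHomogeneous (q i))
    (hi : Function.Injective i) (hr : (J.map i).rank = r) (hfg : (J.submatrix f g).det ≠ 0)
    (k : Fin M) {l : Fin N} (hl : l ∉ Set.range g) :
    IsGenericZero (kernelParam J f g) (kernelLocus J r) := fun P hP => by
  rw [← hP.mem_biconeIdeal_iff, biconeIdeal_kernelLocus hJ hi hr hfg k hl, RingHom.mem_ker]

theorem card_sub_two_le_topologicalKrullDim_closure_kernelLocus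
    (hJ : ∀ i j, (J i j).IsHomogeneous (q i)) (hi : Function.Injective i)
    (hr : (J.map i).rank = r) (hfg : (J.submatrix f g).det ≠ 0) (k : Fin M) {l : Fin N}
    (hl : l ∉ Set.range g) :
    ((Fintype.card (Fin M ⊕ {l // l ∉ Set.range g}) - 2 : ℕ) : WithBot ℕ∞) ≤
      topologicalKrullDim (closure (kernelLocus J r)) := by
  obtain ⟨a, ha⟩ := exists_eval_ne_zero (mul_ne_zero hfg (X_ne_zero (R := ℂ) k))
  simp only [map_mul, eval_X, mul_ne_zero_iff] at ha
  obtain ⟨hDa, hak⟩ := ha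
  let c : Fin M ⊕ {l // l ∉ Set.range g} → ℂ := Sum.elim a (Pi.single ⟨l, hl⟩ 1)
  have hDc : eval c (rename Sum.inl (J.submatrix f g).det) ≠ 0 := by
    rwa [eval_rename, Sum.elim_comp_inl]
  have hcard : ({Sum.inl k, Sum.inr ⟨l, hl⟩}ᶜ : Finset (Fin M ⊕ {l // l ∉ Set.range g})).card =
      Fintype.card (Fin M ⊕ {l // l ∉ Set.range g}) - 2 := by
    rw [Finset.card_compl, Finset.card_pair Sum.inl_ne_inr]
  rw [← hcard]
  refine (isGenericZero_kernelParam hJ hi hr hfg k hl).card_le_topologicalKrullDim_closure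
    (c := c) (i := k) (j := l) ?_ ?_ ?_
  · rwa [kernelParam_X_inl, eval_X]
  · rwa [kernelParam_X_inr hl, map_mul, eval_X,
      show c (.inr ⟨l, hl⟩) = 1 from Pi.single_eq_same _ _, mul_one]
  · rintro (j | l') ht
    · refine ⟨_, isBihomogeneous_inl_sub_inl (a k) (a j) j k, C (a k), ?_, by rwa [eval_C]⟩
      simp only [map_sub, map_mul, kernelParam_X_inl, algHom_C, algebraMap_eq,
        specialize_X_of_mem c ht]
      rw [specialize_X_of_notMem c (by simp)]
      simp only [c, Sum.elim_inl]
      ring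
    · have hcl' : c (.inr l') = 0 := Pi.single_eq_of_ne (fun h => by simp [h] at ht) _
      refine ⟨X (.inr l'), isBihomogeneous_X_inr _,
        specialize c {.inl k, .inr ⟨l, hl⟩}ᶜ (rename Sum.inl (J.submatrix f g).det), ?_,
        (eval_specialize c _ _).trans_ne hDc⟩
      rw [kernelParam_X_inr l'.2, map_mul, specialize_X_of_mem c ht, hcl', map_zero, sub_zero,
        mul_comm]

theorem exists_det_submatrix_ne_zero_and_notMem_range (hi : Function.Injective i)
    (hr : (J.map i).rank = r) (hN : r < N) :
    ∃ (f : Fin r → ι) (g : Fin r → Fin N) (l : Fin N),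
      (J.submatrix f g).det ≠ 0 ∧ l ∉ Set.range g := by
  obtain ⟨f, g, hfg⟩ := exists_det_submatrix_ne_zero (J.map i) hr
  rw [det_submatrix_map, map_ne_zero_iff i hi] at hfg
  obtain ⟨l, hl⟩ : ∃ l, l ∉ Set.range g := by
    by_contra! h
    simpa [hN.not_ge] using Fintype.card_le_of_surjective g h
  exact ⟨f, g, l, hfg, hl⟩

theorem isIrreducible_kernelLocus (hJ : ∀ i j, (J i j).IsHomogeneous (q i))
    (hi : Function.Injective i) (hr : (J.map i).rank = r) (hM : 0 < M) (hN : r < N) :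
    IsIrreducible (kernelLocus J r) := by
  obtain ⟨f, g, l, hfg, hl⟩ := exists_det_submatrix_ne_zero_and_notMem_range hi hr hN
  exact (isGenericZero_kernelParam hJ hi hr hfg ⟨0, hM⟩ hl).isIrreducible

theorem topologicalKrullDim_closure_kernelLocus (hJ : ∀ i j, (J i j).IsHomogeneous (q i))
    (hi : Function.Injective i) (hr : (J.map i).rank = r) (hM : 0 < M) (hN : r < N) :
    topologicalKrullDim (closure (kernelLocus J r)) = (M + (N - r) - 2 : ℕ) := by
  obtain ⟨f, g, l, hfg, hl⟩ := exists_det_submatrix_ne_zero_and_notMem_range hi hr hN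
  rw [← card_kernelParam_variables hfg]
  refine le_antisymm
    (topologicalKrullDim_le_card_sub_two (φ := kernelParam J f g) isClosed_closure ?_)
    (card_sub_two_le_topologicalKrullDim_closure_kernelLocus hJ hi hr hfg ⟨0, hM⟩ hl)
  rw [biconeIdeal_closure]
  exact ker_kernelParam_le hJ hi hr hfg

end KernelLocus

theorem Y0_irreducible_of_dimension_general {ι : Type*} [Finite ι] (M n r : ℕ)
    (J : Matrix ι (Fin (n + 1)) (MvPolynomial (Fin (M + 1)) ℂ)) (q : ι → ℕ)
    (hJ : ∀ i j, (J i j).IsHomogeneous (q i))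
    (hr : r = (J.map (algebraMap (MvPolynomial (Fin (M + 1)) ℂ)
        (FractionRing (MvPolynomial (Fin (M + 1)) ℂ)))).rank)
    (U : Set (PSp (M + 1)))
    (hU : U = {x | (J.map (eval x.rep)).rank = r})
    (Y : Set (PSp (M + 1) × PSp (n + 1)))
    (hY : Y = {p | (J.map (eval p.1.rep)).mulVec p.2.rep = 0})
    (Y₀ : Set (PSp (M + 1) × PSp (n + 1)))
    (hY₀ : Y₀ = closure (Y ∩ (U ×ˢ Set.univ))) :
    (r = n + 1 → Y₀ = ∅) ∧
    (r < n + 1 → IsIrreducible Y₀ ∧ topologicalKrullDim Y₀ = (M + n - r : ℕ)) ∧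
    ((Prod.snd '' Y₀).Nonempty ↔ r < n + 1) ∧
    (r < n + 1 → @IsIrreducible _ (zariski (n + 1)) (Prod.snd '' Y₀)) := by
  replace hY₀ : Y₀ = closure (kernelLocus J r) := by
    rw [hY₀, hY, hU]
    congr 1
    ext p
    simp [kernelLocus]
  have hrn : r ≤ n + 1 := by
    simpa [hr] using Matrix.rank_le_card_width (J.map (algebraMap _ (FractionRing _)))
  have hempty : r = n + 1 → Y₀ = ∅ := fun h => by
    rw [hY₀, h, kernelLocus_eq_empty, closure_empty]
  have hmain (h : r < n + 1) : IsIrreducible Y₀ ∧ topologicalKrullDim Y₀ = (M + n - r : ℕ) := by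
    have hinj := FaithfulSMul.algebraMap_injective (MvPolynomial (Fin (M + 1)) ℂ)
      (FractionRing (MvPolynomial (Fin (M + 1)) ℂ))
    rw [hY₀, show M + n - r = M + 1 + (n + 1 - r) - 2 by omega]
    exact ⟨(isIrreducible_kernelLocus hJ hinj hr.symm M.succ_pos h).closure,
      topologicalKrullDim_closure_kernelLocus hJ hinj hr.symm M.succ_pos h⟩
  refine ⟨hempty, hmain, ⟨fun hne => hrn.lt_of_ne fun h => ?_, fun h => ?_⟩, fun h => ?_⟩
  · simp [hempty h] at hne
  · exact (hmain h).1.nonempty.image _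
  · let := zariski (n + 1)
    exact (hmain h).1.image _ continuous_snd_zariski.continuousOn

end ZariskiTopology

/-- The component `Y₀` of the incidence variety `Y = {(x,z) : J_h(x)·z = 0}` lying over the
locus `U` where the Jacobian `J_h` attains its generic rank `r`: if `r = n+1` then
`Y₀ = ∅`, and if `r < n+1` then `Y₀` is irreducible of dimension `m+1+n-r`; consequently
`pr₂(Y₀) ≠ ∅` iff `r < n+1`, in which case `pr₂(Y₀)` is irreducible. -/
theorem Y0_irreducible_of_dimension
    (m n d r : ℕ)
    (h : Fin (n + 1) → MvPolynomial (Fin (m + 2)) ℂ)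
    (hdeg : ∀ j, (h j).IsHomogeneous d)
    (hind : LinearIndependent ℂ h)
    (J : Matrix (Fin (m + 2)) (Fin (n + 1)) (MvPolynomial (Fin (m + 2)) ℂ))
    (hJ : ∀ i j, J i j = pderiv i (h j))
    (hr : r = (J.map (algebraMap (MvPolynomial (Fin (m + 2)) ℂ)
        (FractionRing (MvPolynomial (Fin (m + 2)) ℂ)))).rank)
    (U : Set (PSp (m + 2)))
    (hU : U = {x | (J.map (eval x.rep)).rank = r})
    (Y : Set (PSp (m + 2) × PSp (n + 1)))
    (hY : Y = {p | (J.map (eval p.1.rep)).mulVec p.2.rep = 0})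
    (Y₀ : Set (PSp (m + 2) × PSp (n + 1)))
    (hY₀ : Y₀ = @closure _ (zariskiProd (m + 2) (n + 1)) (Y ∩ (U ×ˢ Set.univ))) :
    (r = n + 1 → Y₀ = ∅) ∧
    (r < n + 1 →
      @IsIrreducible _ (zariskiProd (m + 2) (n + 1)) Y₀ ∧
      @topologicalKrullDim ↥Y₀
        (TopologicalSpace.induced Subtype.val (zariskiProd (m + 2) (n + 1))) =
        ((m + 1 + n - r : ℕ) : WithBot ℕ∞)) ∧
    ((Prod.snd '' Y₀).Nonempty ↔ r < n + 1) ∧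
    (r < n + 1 → @IsIrreducible _ (zariski (n + 1)) (Prod.snd '' Y₀)) := by
  have hJ' (i j) : (J i j).IsHomogeneous (d - 1) := hJ i j ▸ (hdeg j).pderiv
  exact Y0_irreducible_of_dimension_general (m + 1) n r J _ hJ' hr U hU Y hY Y₀ hY₀
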